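/- arXiv:1503.05567 — 2 statements merged into one kernel-verified Lean document; each statement's English description precedes it below -/
import Mathlib

section
/- Let x^0, x^1, x^2, … ∈ ℝ^m be vectors with ‖x^i‖_2² ≤ B for all i, where B > 0, and for each k let X^{k−1} ∈ ℝ^{k×m} be the matrix with rows x^0,…,x^{k−1}. Let 𝒮 be any family of column index sets (for example, all unions of r groups of a fixed partition of {1,…,m}). Suppose that for some N' the matrix X^{N'−1} satisfies, for every T ∈ 𝒮 and every vector ν of matching dimension, c_*‖ν‖_2² ≤ ‖X^{N'−1}_{*T} ν‖_2²/N' ≤ c^*‖ν‖_2², where 0 < c_* < c^* < ∞. Let c > 1 be a constant. Then for every n' with N' < n' ≤ cN', and every T ∈ 𝒮 and ν, one has (c_*/c)‖ν‖_2² ≤ ‖X^{n'−1}_{*T} ν‖_2²/n' ≤ max(c^*, B)‖ν‖_2²; that is, X^{n'−1} satisfies the sparse Riesz condition with the same rank and spectrum bounds (c_*/c, max(c^*, B)). -/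
/-!
Passing from `N'` to `n'` rows adds `n' - N'` squares `⟨x^i, ν⟩²` to `‖Xν‖²`. Each of them is
nonnegative, so `‖Xν‖²` is still at least `N' c_* ‖ν‖² ≥ n' (c_* / c) ‖ν‖²`; and each is at most
`B ‖ν‖²` by Cauchy–Schwarz, so `‖Xν‖² / n'` is at most a weighted average of `c^* ‖ν‖²` and
`B ‖ν‖²`.
-/

/-- **Proposition 2 (SRC propagation)**: if the design matrix built from the first `N'` rows
`x^0,…,x^{N'−1}` satisfies the sparse Riesz condition with spectrum bounds `(c_*, c^*)` over a
family `𝒮` of column index sets, and every row has `‖x^i‖₂² ≤ B`, then for every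
`N' < n' ≤ cN'` the design matrix built from the first `n'` rows satisfies the SRC with
spectrum bounds `(c_*/c, max(c^*, B))`.  A vector "in ℝ^T" is modelled as a vector
supported on `T`. -/
theorem stmt2 (m : ℕ) (x : ℕ → Fin m → ℝ) (B : ℝ) (hB : 0 < B)
    (hx : ∀ i : ℕ, ∑ j, x i j ^ 2 ≤ B)
    (clow chigh : ℝ) (hclow : 0 < clow) (hcc : clow < chigh)
    (N' : ℕ) (hN' : 0 < N')
    (𝒮 : Set (Finset (Fin m)))
    (hSRC : ∀ T ∈ 𝒮, ∀ ν : Fin m → ℝ, (∀ j ∉ T, ν j = 0) →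
      clow * ∑ j, ν j ^ 2 ≤ (∑ i : Fin N', (∑ j, x (i : ℕ) j * ν j) ^ 2) / (N' : ℝ) ∧
      (∑ i : Fin N', (∑ j, x (i : ℕ) j * ν j) ^ 2) / (N' : ℝ) ≤ chigh * ∑ j, ν j ^ 2)
    (c : ℝ) (hc : 1 < c) :
    ∀ n' : ℕ, N' < n' → (n' : ℝ) ≤ c * N' →
      ∀ T ∈ 𝒮, ∀ ν : Fin m → ℝ, (∀ j ∉ T, ν j = 0) →
        (clow / c) * ∑ j, ν j ^ 2 ≤ (∑ i : Fin n', (∑ j, x (i : ℕ) j * ν j) ^ 2) / (n' : ℝ) ∧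
        (∑ i : Fin n', (∑ j, x (i : ℕ) j * ν j) ^ 2) / (n' : ℝ) ≤
          max chigh B * ∑ j, ν j ^ 2 := by
  intro n' hn hnc T hT ν hν
  obtain ⟨h1, h2⟩ := hSRC T hT ν hν
  have hN : (0 : ℝ) < N' := by exact_mod_cast hN'
  have hNn : (N' : ℝ) < n' := by exact_mod_cast hn
  have hn0 : (0 : ℝ) < n' := hN.trans hNn
  have hc0 : 0 < c := by linarith
  rw [Fin.sum_univ_eq_sum_range (fun i => (∑ j, x i j * ν j) ^ 2)] at h1 h2 ⊢
  rw [le_div_iff₀ hN] at h1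
  rw [div_le_iff₀ hN] at h2
  rw [le_div_iff₀ hn0, div_le_iff₀ hn0,
    ← Finset.sum_range_add_sum_Ico (fun i => (∑ j, x i j * ν j) ^ 2) hn.le]
  have hV : 0 ≤ ∑ j, ν j ^ 2 := Finset.sum_nonneg fun _ _ => sq_nonneg _
  set V := ∑ j, ν j ^ 2
  have hlo : 0 ≤ ∑ i ∈ Finset.Ico N' n', (∑ j, x i j * ν j) ^ 2 :=
    Finset.sum_nonneg fun _ _ => sq_nonneg _
  have hhi : ∑ i ∈ Finset.Ico N' n', (∑ j, x i j * ν j) ^ 2 ≤ (n' - N') * (B * V) := by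
    calc _ ≤ ∑ i ∈ Finset.Ico N' n', B * V := Finset.sum_le_sum fun i _ =>
          (Finset.sum_mul_sq_le_sq_mul_sq _ _ _).trans (mul_le_mul_of_nonneg_right (hx i) hV)
      _ = (n' - N') * (B * V) := by
          rw [Finset.sum_const, Nat.card_Ico, nsmul_eq_mul, Nat.cast_sub hn.le]
  constructor
  · have : clow / c * V * n' ≤ clow * V * N' := by
      calc clow / c * V * n' ≤ clow / c * V * (c * N') := by gcongr
        _ = clow * V * N' := by field_simp
    linarith
  · have e1 : chigh * V * N' ≤ max chigh B * V * N' := by gcongr; exact le_max_left _ _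
    have e2 : (n' - N') * (B * V) ≤ (n' - N') * (max chigh B * V) := by
      have : (0 : ℝ) ≤ n' - N' := by linarith
      gcongr
      exact le_max_right _ _
    linarith
end

section
/- (Deterministic core of Theorem 1, part (2), as established in the appendix proof.) Fix integers N' ≥ 1 and n ≥ 2N', an integer p ≥ 3, reals σ > 0, d̄ ≥ 1, s* ≥ 1, and positive constants C_6, C_7, C_8, C_min, C_max, c_λ. Let θ ∈ ℝ^D be the true coefficient vector on a coordinate set of size D, let θ^{N'−1} ∈ ℝ^D be a prior mean, and let Σ_0 ∈ ℝ^{D×D} be symmetric positive definite. For each n' = N',…,n set λ_{n'} = c_λ σ d̄ √(n' log p), and suppose we are given: vectors θ̂^{n'} ∈ ℝ^D with ‖θ̂^{n'} − θ‖_2 ≤ C_6 σ d̄ √(s* (log p)/n'); symmetric matrices M_{n'} with (C_8/n')‖ν‖_2² ≤ ν^T M_{n'} ν ≤ (C_7/n')‖ν‖_2² for all ν; and symmetric matrices C_{n'} with C_min‖ν‖_2² ≤ ν^T C_{n'} ν ≤ C_max‖ν‖_2² for all ν. Define Σ̂_{n'} = σ² M_{n'} + λ_{n'}² M_{n'} C_{n'}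 M_{n'}, the posterior covariance Σ_n = [Σ_0^{-1} + Σ_{n'=N'}^n Σ̂_{n'}^{-1}]^{-1}, and the posterior mean θ^n = Σ_n [Σ_0^{-1} θ^{N'−1} + Σ_{n'=N'}^n Σ̂_{n'}^{-1} θ̂^{n'}]. Then there exist constants K_1, K_2 > 0, depending only on (C_6, C_7, C_8, C_min, C_max, c_λ), such that ‖θ^n − θ‖_2 ≤ K_1 σ d̄ √(s* (log p)/n) + K_2 σ² d̄² (log p) ‖Σ_0^{-1}‖_2 ‖θ^{N'−1} − θ‖_2 / n². -/
/-!
Writing `e = θ^n − θ`, the posterior mean satisfies the normal equation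
`A e = Σ₀⁻¹ (θ^{N'−1} − θ) + ∑ Σ̂_k⁻¹ (θ̂^k − θ)` with `A = Σ₀⁻¹ + ∑ Σ̂_k⁻¹`.  Put
`τ = σ² d̄² log p`.  The eigenvalue bounds on `M_k` and `C_k` (and `log p ≥ 1`, `d̄ ≥ 1`) give
`a τ / k ≤ Σ̂_k ≤ b τ / k` with `a = c_λ² C_min C₈²` and `b = C₇ + c_λ² C_max C₇²`
(`sandwich_bounds`), hence `Σ̂_k⁻¹ ≥ k / (b τ)` as a quadratic form and
`‖Σ̂_k⁻¹ w‖ ≤ k / (a τ) ‖w‖` (`inv_bounds`).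

Pair the normal equation with `e`.  The left side is at least `n² / (4 b τ) ‖e‖²`, because
`∑_{k=N'}^n k ≥ n² / 4` when `2 N' ≤ n`; the right side is at most
`‖e‖ (‖Σ₀⁻¹‖ ‖θ^{N'−1} − θ‖ + n √n C₆ σ d̄ √(s* log p) / (a τ))`, because `∑ √k ≤ n √n`.
Dividing gives the claim with `K₁ = 4 b C₆ / a` and `K₂ = 4 b`.
-/

open Matrix

/-- Euclidean norm of a vector in `ℝ^d`. -/
noncomputable def vecNorm {d : ℕ} (v : Fin d → ℝ) : ℝ :=
  Real.sqrt (∑ k, v k ^ 2)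

/-- Operator 2-norm of a square matrix: `sup {‖Mν‖₂ : ‖ν‖₂ = 1}`. -/
noncomputable def opNorm2 {d : ℕ} (M : Matrix (Fin d) (Fin d) ℝ) : ℝ :=
  sSup {t : ℝ | ∃ ν : Fin d → ℝ, ∑ k, ν k ^ 2 = 1 ∧ t = vecNorm (M.mulVec ν)}

/-! ### The Euclidean norm and the operator norm -/

section Norms

variable {d : ℕ}

lemma vecNorm_nonneg (v : Fin d → ℝ) : 0 ≤ vecNorm v := Real.sqrt_nonneg _

lemma sum_sq_eq_dot (v : Fin d → ℝ) : ∑ k, v k ^ 2 = v ⬝ᵥ v := by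
  simp [dotProduct, sq]

lemma dot_self_nonneg (v : Fin d → ℝ) : 0 ≤ v ⬝ᵥ v := by
  rw [← sum_sq_eq_dot]; positivity

lemma vecNorm_sq (v : Fin d → ℝ) : vecNorm v ^ 2 = v ⬝ᵥ v := by
  rw [vecNorm, Real.sq_sqrt (by positivity), sum_sq_eq_dot]

lemma dot_le_vecNorm (v w : Fin d → ℝ) : v ⬝ᵥ w ≤ vecNorm v * vecNorm w := by
  refine abs_le_of_sq_le_sq' ?_ (mul_nonneg (vecNorm_nonneg _) (vecNorm_nonneg _)) |>.2
  rw [mul_pow, vecNorm_sq, vecNorm_sq, ← sum_sq_eq_dot, ← sum_sq_eq_dot]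
  exact Finset.sum_mul_sq_le_sq_mul_sq _ _ _

lemma vecNorm_smul (c : ℝ) (hc : 0 ≤ c) (v : Fin d → ℝ) : vecNorm (c • v) = c * vecNorm v := by
  simp only [vecNorm, Pi.smul_apply, smul_eq_mul, mul_pow, ← Finset.mul_sum]
  rw [Real.sqrt_mul (by positivity), Real.sqrt_sq hc]

/-- The supremum defining `opNorm2` is over a bounded set (the Frobenius norm is a bound), so it
really dominates every `‖M v‖ / ‖v‖`. -/
lemma vecNorm_mulVec_le (M : Matrix (Fin d) (Fin d) ℝ) (v : Fin d → ℝ) :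
    vecNorm (M *ᵥ v) ≤ opNorm2 M * vecNorm v := by
  have hbdd : BddAbove
      {t : ℝ | ∃ ν : Fin d → ℝ, ∑ k, ν k ^ 2 = 1 ∧ t = vecNorm (M.mulVec ν)} := by
    refine ⟨Real.sqrt (∑ i, ∑ j, M i j ^ 2), ?_⟩
    rintro t ⟨ν, hν, rfl⟩
    refine Real.sqrt_le_sqrt (Finset.sum_le_sum fun i _ => ?_)
    have := Finset.sum_mul_sq_le_sq_mul_sq Finset.univ (M i) ν
    rw [hν, mul_one] at this
    exact this
  rcases (vecNorm_nonneg v).eq_or_lt with h0 | hpos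
  · have hv : v = 0 := by
      rw [← dotProduct_self_eq_zero, ← vecNorm_sq, ← h0]; norm_num
    subst hv
    simp [vecNorm]
  · have hunit : ∑ k, ((vecNorm v)⁻¹ • v) k ^ 2 = 1 := by
      rw [sum_sq_eq_dot, ← vecNorm_sq, vecNorm_smul _ (by positivity), inv_mul_cancel₀ hpos.ne']
      norm_num
    have h := le_csSup hbdd ⟨_, hunit, rfl⟩
    rw [mulVec_smul, vecNorm_smul _ (by positivity), inv_mul_le_iff₀ hpos] at h
    rw [mul_comm]
    exact h

end Norms

/-! ### Consequences of two-sided bounds on quadratic forms -/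

section QuadraticForms

variable {d : ℕ}

/-- A lower bound on the quadratic form of `M` bounds `‖M v‖` below. -/
lemma lower_mulVec {M : Matrix (Fin d) (Fin d) ℝ} {c : ℝ}
    (h : ∀ v : Fin d → ℝ, c * (v ⬝ᵥ v) ≤ v ⬝ᵥ M *ᵥ v) (v : Fin d → ℝ) :
    c * vecNorm v ≤ vecNorm (M *ᵥ v) := by
  rcases (vecNorm_nonneg v).eq_or_lt with h0 | hpos
  · rw [← h0, mul_zero]; exact vecNorm_nonneg _
  · have h1 := (h v).trans (dot_le_vecNorm v (M *ᵥ v))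
    rw [← vecNorm_sq] at h1
    nlinarith

/-- For symmetric `M` with `0 ≤ M ≤ c`, one has `M² ≤ c M`. -/
lemma mulVec_sq_le {M : Matrix (Fin d) (Fin d) ℝ} {c : ℝ} (hc : 0 < c) (hM : M.IsSymm)
    (h0 : ∀ v : Fin d → ℝ, 0 ≤ v ⬝ᵥ M *ᵥ v)
    (h : ∀ v : Fin d → ℝ, v ⬝ᵥ M *ᵥ v ≤ c * (v ⬝ᵥ v)) (v : Fin d → ℝ) :
    (M *ᵥ v) ⬝ᵥ (M *ᵥ v) ≤ c * (v ⬝ᵥ M *ᵥ v) := by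
  -- nonnegativity of the form at `c v - M v`, expanded
  have h1 := h0 (c • v - M *ᵥ v)
  have h2 := h (M *ᵥ v)
  have hs : v ⬝ᵥ M *ᵥ (M *ᵥ v) = (M *ᵥ v) ⬝ᵥ (M *ᵥ v) := by
    rw [dotProduct_mulVec, ← mulVec_transpose, hM.eq]
  simp only [mulVec_sub, mulVec_smul, dotProduct_sub, sub_dotProduct, dotProduct_smul,
    smul_dotProduct, smul_eq_mul, hs] at h1
  have h3 : 0 ≤ c * (c * (v ⬝ᵥ M *ᵥ v) - (M *ᵥ v) ⬝ᵥ (M *ᵥ v)) := by nlinarith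
  nlinarith [nonneg_of_mul_nonneg_right h3 hc]

lemma isUnit_of_lower {M : Matrix (Fin d) (Fin d) ℝ} {c : ℝ} (hc : 0 < c)
    (h : ∀ v : Fin d → ℝ, c * (v ⬝ᵥ v) ≤ v ⬝ᵥ M *ᵥ v) : IsUnit M := by
  rw [← mulVec_injective_iff_isUnit]
  intro x y hxy
  have h1 := h (x - y)
  have h2 : M *ᵥ (x - y) = 0 := by rw [mulVec_sub]; exact sub_eq_zero.2 hxy
  rw [h2, dotProduct_zero] at h1
  have h3 : (x - y) ⬝ᵥ (x - y) = 0 := by nlinarith [dot_self_nonneg (x - y)]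
  exact sub_eq_zero.1 (dotProduct_self_eq_zero.1 h3)

/-- If `α ≤ S ≤ β` then `S⁻¹ ≥ 1 / β` as a quadratic form and `‖S⁻¹‖ ≤ 1 / α`. -/
lemma inv_bounds {S : Matrix (Fin d) (Fin d) ℝ} {α β : ℝ} (hα : 0 < α) (hβ : 0 < β)
    (hS : S.IsSymm) (hl : ∀ v : Fin d → ℝ, α * (v ⬝ᵥ v) ≤ v ⬝ᵥ S *ᵥ v)
    (hu : ∀ v : Fin d → ℝ, v ⬝ᵥ S *ᵥ v ≤ β * (v ⬝ᵥ v)) (w : Fin d → ℝ) :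
    1 / β * (w ⬝ᵥ w) ≤ w ⬝ᵥ S⁻¹ *ᵥ w ∧ vecNorm (S⁻¹ *ᵥ w) ≤ 1 / α * vecNorm w := by
  have hdet : IsUnit S.det := (isUnit_iff_isUnit_det S).1 (isUnit_of_lower hα hl)
  have hw : S *ᵥ (S⁻¹ *ᵥ w) = w := by
    rw [mulVec_mulVec, mul_nonsing_inv _ hdet, one_mulVec]
  constructor
  · have h := mulVec_sq_le hβ hS
      (fun v => (mul_nonneg hα.le (dot_self_nonneg v)).trans (hl v)) hu (S⁻¹ *ᵥ w)
    rw [hw, dotProduct_comm (S⁻¹ *ᵥ w)] at h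
    rw [one_div, inv_mul_le_iff₀ hβ]
    exact h
  · have h := lower_mulVec hl (S⁻¹ *ᵥ w)
    rw [hw] at h
    rw [one_div, le_inv_mul_iff₀ hα]
    exact h

/-- Two-sided bounds for `s M + t M C M` from two-sided bounds `m₁ ≤ M ≤ m₂`, `c₁ ≤ C ≤ c₂`; the
term `s M` is dropped in the lower bound. -/
lemma sandwich_bounds {M C : Matrix (Fin d) (Fin d) ℝ} {m₁ m₂ c₁ c₂ s t : ℝ}
    (hm₁ : 0 < m₁) (hm₂ : 0 < m₂) (hc₁ : 0 < c₁) (hc₂ : 0 < c₂) (hs : 0 ≤ s) (ht : 0 ≤ t)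
    (hM : M.IsSymm) (hMl : ∀ v : Fin d → ℝ, m₁ * (v ⬝ᵥ v) ≤ v ⬝ᵥ M *ᵥ v)
    (hMu : ∀ v : Fin d → ℝ, v ⬝ᵥ M *ᵥ v ≤ m₂ * (v ⬝ᵥ v))
    (hCl : ∀ v : Fin d → ℝ, c₁ * (v ⬝ᵥ v) ≤ v ⬝ᵥ C *ᵥ v)
    (hCu : ∀ v : Fin d → ℝ, v ⬝ᵥ C *ᵥ v ≤ c₂ * (v ⬝ᵥ v)) (v : Fin d → ℝ) :
    t * (c₁ * m₁ ^ 2) * (v ⬝ᵥ v) ≤ v ⬝ᵥ (s • M + t • (M * C * M)) *ᵥ v ∧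
      v ⬝ᵥ (s • M + t • (M * C * M)) *ᵥ v ≤ (s * m₂ + t * (c₂ * m₂ ^ 2)) * (v ⬝ᵥ v) := by
  have hM0 : ∀ v : Fin d → ℝ, 0 ≤ v ⬝ᵥ M *ᵥ v :=
    fun v => (mul_nonneg hm₁.le (dot_self_nonneg v)).trans (hMl v)
  have hE : v ⬝ᵥ (s • M + t • (M * C * M)) *ᵥ v =
      s * (v ⬝ᵥ M *ᵥ v) + t * ((M *ᵥ v) ⬝ᵥ C *ᵥ (M *ᵥ v)) := by
    have h : v ⬝ᵥ M *ᵥ (C *ᵥ (M *ᵥ v)) = (M *ᵥ v) ⬝ᵥ C *ᵥ (M *ᵥ v) := by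
      rw [dotProduct_mulVec, ← mulVec_transpose, hM.eq]
    rw [add_mulVec, smul_mulVec, smul_mulVec, dotProduct_add, dotProduct_smul, dotProduct_smul,
      ← mulVec_mulVec, ← mulVec_mulVec, h, smul_eq_mul, smul_eq_mul]
  rw [hE]
  have hlow : m₁ ^ 2 * (v ⬝ᵥ v) ≤ (M *ᵥ v) ⬝ᵥ (M *ᵥ v) := by
    rw [← vecNorm_sq, ← vecNorm_sq, ← mul_pow]
    exact pow_le_pow_left₀ (mul_nonneg hm₁.le (vecNorm_nonneg v)) (lower_mulVec hMl v) 2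
  have hup : (M *ᵥ v) ⬝ᵥ (M *ᵥ v) ≤ m₂ ^ 2 * (v ⬝ᵥ v) := by
    have := mul_le_mul_of_nonneg_left (hMu v) hm₂.le
    nlinarith [mulVec_sq_le hm₂ hM hM0 hMu v]
  have hl : c₁ * (m₁ ^ 2 * (v ⬝ᵥ v)) ≤ (M *ᵥ v) ⬝ᵥ C *ᵥ (M *ᵥ v) :=
    (mul_le_mul_of_nonneg_left hlow hc₁.le).trans (hCl _)
  have hu : (M *ᵥ v) ⬝ᵥ C *ᵥ (M *ᵥ v) ≤ c₂ * (m₂ ^ 2 * (v ⬝ᵥ v)) :=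
    (hCu _).trans (mul_le_mul_of_nonneg_left hup hc₂.le)
  have hl' := mul_le_mul_of_nonneg_left hl ht
  have hu' := mul_le_mul_of_nonneg_left hu ht
  have hs1 := mul_nonneg hs (hM0 v)
  have hs2 := mul_le_mul_of_nonneg_left (hMu v) hs
  constructor <;> linarith

end QuadraticForms

/-! ### Elementary sums -/

section Sums

lemma sum_Icc_eq (N' m : ℕ) (h : N' ≤ m) :
    ∑ k ∈ Finset.Icc N' m, (k : ℝ) = ((m : ℝ) - N' + 1) * (m + N') / 2 := by
  induction m, h using Nat.le_induction with
  | base => simp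
  | succ m hm ih =>
    rw [Finset.sum_Icc_succ_top (by omega), ih]
    push_cast
    ring

lemma sum_Icc_lower {N' n : ℕ} (h : 2 * N' ≤ n) :
    (n : ℝ) ^ 2 / 4 ≤ ∑ k ∈ Finset.Icc N' n, (k : ℝ) := by
  rw [sum_Icc_eq _ _ (by omega)]
  have h1 : (2 : ℝ) * N' ≤ n := by exact_mod_cast h
  have h2 : (0 : ℝ) ≤ N' := by positivity
  nlinarith

lemma sum_sqrt_upper {N' n : ℕ} (h1 : 1 ≤ N') :
    ∑ k ∈ Finset.Icc N' n, Real.sqrt k ≤ n * Real.sqrt n := by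
  calc ∑ k ∈ Finset.Icc N' n, Real.sqrt k
      ≤ ∑ k ∈ Finset.Icc N' n, Real.sqrt n := by
        refine Finset.sum_le_sum fun k hk => Real.sqrt_le_sqrt ?_
        exact_mod_cast (Finset.mem_Icc.1 hk).2
    _ = ((n + 1 - N' : ℕ) : ℝ) * Real.sqrt n := by simp
    _ ≤ n * Real.sqrt n := by
        gcongr
        omega

lemma one_le_log_of_three_le {p : ℕ} (hp : 3 ≤ p) : 1 ≤ Real.log p := by
  have h3 : (3 : ℝ) ≤ p := by exact_mod_cast hp
  rw [Real.le_log_iff_exp_le (by linarith)]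
  linarith [Real.exp_one_lt_d9]

end Sums

/-! ### Error of a precision-weighted mean -/

/-- Stability of a precision-weighted average: with weights `P₀ ≥ 0` and `P_k ≥ l_k`, `∑ l_k ≥ L > 0`,
`‖P_k w‖ ≤ u_k ‖w‖`, the average of `x₀` and the `x_k` is within
`(‖P₀‖ ‖x₀ - θ‖ + ∑ u_k ‖x_k - θ‖) / L` of any `θ`. -/
lemma weighted_mean_bound {d : ℕ} (I : Finset ℕ) (P₀ : Matrix (Fin d) (Fin d) ℝ)
    (P : ℕ → Matrix (Fin d) (Fin d) ℝ) (l u : ℕ → ℝ) {L : ℝ} (hL : 0 < L)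
    (hLl : L ≤ ∑ k ∈ I, l k) (h₀ : ∀ v : Fin d → ℝ, 0 ≤ v ⬝ᵥ P₀ *ᵥ v)
    (hl : ∀ k ∈ I, ∀ v : Fin d → ℝ, l k * (v ⬝ᵥ v) ≤ v ⬝ᵥ P k *ᵥ v)
    (hu : ∀ k ∈ I, ∀ v : Fin d → ℝ, vecNorm (P k *ᵥ v) ≤ u k * vecNorm v)
    (θ x₀ : Fin d → ℝ) (x : ℕ → Fin d → ℝ) :
    L * vecNorm ((P₀ + ∑ k ∈ I, P k)⁻¹ *ᵥ (P₀ *ᵥ x₀ + ∑ k ∈ I, P k *ᵥ x k) - θ) ≤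
      opNorm2 P₀ * vecNorm (x₀ - θ) + ∑ k ∈ I, u k * vecNorm (x k - θ) := by
  set A := P₀ + ∑ k ∈ I, P k with hA
  set e := A⁻¹ *ᵥ (P₀ *ᵥ x₀ + ∑ k ∈ I, P k *ᵥ x k) - θ with he
  have hAl : ∀ v : Fin d → ℝ, L * (v ⬝ᵥ v) ≤ v ⬝ᵥ A *ᵥ v := by
    intro v
    rw [hA, add_mulVec, sum_mulVec, dotProduct_add, dotProduct_sum]
    have h1 := Finset.sum_le_sum fun k hk => hl k hk v
    rw [← Finset.sum_mul] at h1
    have h2 := mul_le_mul_of_nonneg_right hLl (dot_self_nonneg v)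
    linarith [h₀ v]
  have hdet : IsUnit A.det := (isUnit_iff_isUnit_det A).1 (isUnit_of_lower hL hAl)
  have hAe : A *ᵥ e = P₀ *ᵥ (x₀ - θ) + ∑ k ∈ I, P k *ᵥ (x k - θ) := by
    rw [he, mulVec_sub, mulVec_mulVec, mul_nonsing_inv _ hdet, one_mulVec]
    simp only [hA, add_mulVec, sum_mulVec, mulVec_sub, Finset.sum_sub_distrib]
    abel
  have hmain : L * vecNorm e ^ 2 ≤ vecNorm e *
      (opNorm2 P₀ * vecNorm (x₀ - θ) + ∑ k ∈ I, u k * vecNorm (x k - θ)) := by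
    rw [vecNorm_sq]
    refine (hAl e).trans ?_
    rw [hAe, dotProduct_add, dotProduct_sum, mul_add, Finset.mul_sum]
    refine add_le_add ?_ (Finset.sum_le_sum fun k hk => ?_)
    · exact (dot_le_vecNorm _ _).trans
        (mul_le_mul_of_nonneg_left (vecNorm_mulVec_le _ _) (vecNorm_nonneg _))
    · exact (dot_le_vecNorm _ _).trans
        (mul_le_mul_of_nonneg_left (hu k hk _) (vecNorm_nonneg _))
  rcases (vecNorm_nonneg e).eq_or_lt with h0 | hpos
  · rw [← h0, mul_zero]
    refine add_nonneg ((vecNorm_nonneg _).trans (vecNorm_mulVec_le _ _))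
      (Finset.sum_nonneg fun k hk => (vecNorm_nonneg _).trans (hu k hk _))
  · nlinarith

/-- **Deterministic core of Theorem 1, part (2)** (appendix proof): given group-Lasso
estimates `θ̂^{n'}` with error `≤ C₆ σ d̄ √(s* log p / n')`, matrices `M_{n'}` and `C_{n'}`
with the stated two-sided eigenvalue bounds, simulated covariances
`Σ̂_{n'} = σ²M_{n'} + λ_{n'}² M_{n'} C_{n'} M_{n'}` with `λ_{n'} = c_λ σ d̄ √(n' log p)`,
and the precision-weighted posterior mean
`θ^n = Σ_n [Σ₀⁻¹ θ^{N'−1} + Σ_{n'} Σ̂_{n'}⁻¹ θ̂^{n'}]`,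
`Σ_n = [Σ₀⁻¹ + Σ_{n'} Σ̂_{n'}⁻¹]⁻¹`, there are constants `K₁, K₂ > 0` depending only on
`(C₆, C₇, C₈, C_min, C_max, c_λ)` such that
`‖θ^n − θ‖₂ ≤ K₁ σ d̄ √(s* log p / n) + K₂ σ² d̄² (log p) ‖Σ₀⁻¹‖₂ ‖θ^{N'−1} − θ‖₂ / n²`. -/
theorem stmt8 :
    ∀ C6 C7 C8 Cmin Cmax clam : ℝ,
      0 < C6 → 0 < C7 → 0 < C8 → 0 < Cmin → 0 < Cmax → 0 < clam →
      ∃ K1 K2 : ℝ, 0 < K1 ∧ 0 < K2 ∧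
        ∀ (N' n p : ℕ) (σ dbar sstar : ℝ) (D : ℕ)
          (θ θprior : Fin D → ℝ) (Sigma0 : Matrix (Fin D) (Fin D) ℝ)
          (θhat : ℕ → Fin D → ℝ) (M C : ℕ → Matrix (Fin D) (Fin D) ℝ),
          1 ≤ N' → 2 * N' ≤ n → 3 ≤ p → 0 < σ → 1 ≤ dbar → 1 ≤ sstar →
          Sigma0.PosDef →
          (∀ n' ∈ Finset.Icc N' n,
            vecNorm (fun i => θhat n' i - θ i) ≤
              C6 * σ * dbar * Real.sqrt (sstar * Real.log p / (n' : ℝ))) →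
          (∀ n' ∈ Finset.Icc N' n, (M n').IsSymm ∧
            ∀ ν : Fin D → ℝ,
              (C8 / (n' : ℝ)) * ∑ k, ν k ^ 2 ≤ ν ⬝ᵥ (M n').mulVec ν ∧
              ν ⬝ᵥ (M n').mulVec ν ≤ (C7 / (n' : ℝ)) * ∑ k, ν k ^ 2) →
          (∀ n' ∈ Finset.Icc N' n, (C n').IsSymm ∧
            ∀ ν : Fin D → ℝ,
              Cmin * ∑ k, ν k ^ 2 ≤ ν ⬝ᵥ (C n').mulVec ν ∧
              ν ⬝ᵥ (C n').mulVec ν ≤ Cmax * ∑ k, ν k ^ 2) →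
          ∀ Sigmahat : ℕ → Matrix (Fin D) (Fin D) ℝ,
            (∀ n' : ℕ, Sigmahat n' =
              σ ^ 2 • M n' +
                (clam * σ * dbar * Real.sqrt ((n' : ℝ) * Real.log p)) ^ 2 •
                  (M n' * C n' * M n')) →
          ∀ Sigmapost : Matrix (Fin D) (Fin D) ℝ,
            Sigmapost = (Sigma0⁻¹ + ∑ n' ∈ Finset.Icc N' n, (Sigmahat n')⁻¹)⁻¹ →
          ∀ θpost : Fin D → ℝ,
            θpost = Sigmapost.mulVec
              (Sigma0⁻¹.mulVec θprior +
                ∑ n' ∈ Finset.Icc N' n, ((Sigmahat n')⁻¹).mulVec (θhat n')) →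
          vecNorm (fun i => θpost i - θ i) ≤
            K1 * σ * dbar * Real.sqrt (sstar * Real.log p / (n : ℝ)) +
              K2 * σ ^ 2 * dbar ^ 2 * Real.log p * opNorm2 Sigma0⁻¹ *
                vecNorm (fun i => θprior i - θ i) / (n : ℝ) ^ 2 := by
  intro C6 C7 C8 Cmin Cmax clam hC6 hC7 hC8 hCmin hCmax hclam
  obtain ⟨a, ha⟩ : ∃ a, a = clam ^ 2 * (Cmin * C8 ^ 2) := ⟨_, rfl⟩
  obtain ⟨b, hb⟩ : ∃ b, b = C7 + clam ^ 2 * (Cmax * C7 ^ 2) := ⟨_, rfl⟩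
  have ha0 : 0 < a := by rw [ha]; positivity
  have hb0 : 0 < b := by rw [hb]; positivity
  refine ⟨4 * b * C6 / a, 4 * b, by positivity, by positivity, ?_⟩
  intro N' n p σ dbar sstar D θ θprior Sigma0 θhat M C hN' hn hp hσ hdbar hsstar hS0 hθ hM hC
    Sigmahat hSh Sigmapost hSp θpost hθp
  subst hSp hθp
  have hL := one_le_log_of_three_le hp
  set L := Real.log p
  have hd0 : 0 < dbar := by linarith
  have hL0 : 0 < L := by linarith
  have hn0 : (0 : ℝ) < n := by
    have : 0 < n := by omega
    exact_mod_cast this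
  obtain ⟨τ, hτ⟩ : ∃ τ, τ = σ ^ 2 * dbar ^ 2 * L := ⟨_, rfl⟩
  have hτ0 : 0 < τ := by rw [hτ]; positivity
  have hστ : σ ^ 2 ≤ τ := by
    have : 1 ≤ dbar ^ 2 * L := by nlinarith
    rw [hτ, mul_assoc]
    nlinarith [sq_nonneg σ]
  have hk0 : ∀ k ∈ Finset.Icc N' n, (0 : ℝ) < k := by
    intro k hk
    have : 0 < k := by have := (Finset.mem_Icc.1 hk).1; omega
    exact_mod_cast this
  have hinv : ∀ k ∈ Finset.Icc N' n, ∀ v : Fin D → ℝ,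
      k / (b * τ) * (v ⬝ᵥ v) ≤ v ⬝ᵥ (Sigmahat k)⁻¹ *ᵥ v ∧
        vecNorm ((Sigmahat k)⁻¹ *ᵥ v) ≤ k / (a * τ) * vecNorm v := by
    intro k hk
    have hk' := hk0 k hk
    obtain ⟨hMs, hMb⟩ := hM k hk
    obtain ⟨hCs, hCb⟩ := hC k hk
    simp only [sum_sq_eq_dot] at hMb hCb
    have ht : (clam * σ * dbar * Real.sqrt ((k : ℝ) * L)) ^ 2 = clam ^ 2 * τ * k := by
      rw [mul_pow, Real.sq_sqrt (by positivity), hτ]; ring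
    have hS := hSh k
    rw [ht] at hS
    have hbd := sandwich_bounds (s := σ ^ 2) (t := clam ^ 2 * τ * k)
      (by positivity : 0 < C8 / (k : ℝ)) (by positivity : 0 < C7 / (k : ℝ)) hCmin hCmax
      (by positivity) (by positivity) hMs (fun v => (hMb v).1) (fun v => (hMb v).2)
      (fun v => (hCb v).1) (fun v => (hCb v).2)
    rw [← hS] at hbd
    have hsymm : (Sigmahat k).IsSymm := by
      rw [hS, Matrix.IsSymm]
      simp [transpose_mul, hMs.eq, hCs.eq, Matrix.mul_assoc]
    have e1 : clam ^ 2 * τ * k * (Cmin * (C8 / (k : ℝ)) ^ 2) = a * τ / k := by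
      rw [ha]; field_simp
    have e2 : σ ^ 2 * (C7 / (k : ℝ)) + clam ^ 2 * τ * k * (Cmax * (C7 / (k : ℝ)) ^ 2)
        ≤ b * τ / k := by
      have : clam ^ 2 * τ * k * (Cmax * (C7 / (k : ℝ)) ^ 2)
          = τ * (clam ^ 2 * (Cmax * C7 ^ 2) / k) := by field_simp
      rw [this]
      have h2 : σ ^ 2 * (C7 / (k : ℝ)) ≤ τ * (C7 / (k : ℝ)) := by gcongr
      have h3 : b * τ / k = τ * (C7 / (k : ℝ)) + τ * (clam ^ 2 * (Cmax * C7 ^ 2) / k) := by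
        rw [hb]; ring
      linarith
    have := inv_bounds (by positivity : 0 < a * τ / k) (by positivity : 0 < b * τ / k) hsymm
      (fun v => by rw [← e1]; exact (hbd v).1)
      (fun v => (hbd v).2.trans (mul_le_mul_of_nonneg_right e2 (dot_self_nonneg v)))
    simpa only [one_div_div] using this
  have hsum : (n : ℝ) ^ 2 / (4 * b * τ) ≤ ∑ k ∈ Finset.Icc N' n, (k : ℝ) / (b * τ) := by
    rw [← Finset.sum_div, le_div_iff₀ (by positivity)]
    refine le_trans (le_of_eq ?_) (sum_Icc_lower hn)
    field_simp
  have hP0 : ∀ v : Fin D → ℝ, 0 ≤ v ⬝ᵥ Sigma0⁻¹ *ᵥ v := fun v => by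
    simpa using hS0.inv.posSemidef.dotProduct_mulVec_nonneg v
  have key := weighted_mean_bound (Finset.Icc N' n) Sigma0⁻¹ (fun k => (Sigmahat k)⁻¹)
    (fun k => (k : ℝ) / (b * τ)) (fun k => (k : ℝ) / (a * τ))
    (by positivity : 0 < (n : ℝ) ^ 2 / (4 * b * τ)) hsum hP0
    (fun k hk v => (hinv k hk v).1) (fun k hk v => (hinv k hk v).2) θ θprior θhat
  have herr : ∑ k ∈ Finset.Icc N' n, (k : ℝ) / (a * τ) * vecNorm (θhat k - θ) ≤
      C6 * σ * dbar * Real.sqrt (sstar * L) / (a * τ) * (n * Real.sqrt n) := by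
    calc _ ≤ ∑ k ∈ Finset.Icc N' n,
          C6 * σ * dbar * Real.sqrt (sstar * L) / (a * τ) * Real.sqrt k := by
          refine Finset.sum_le_sum fun k hk => ?_
          have hk' := hk0 k hk
          have hsq : 0 < Real.sqrt (k : ℝ) := Real.sqrt_pos.2 hk'
          refine (mul_le_mul_of_nonneg_left (hθ k hk) (by positivity)).trans (le_of_eq ?_)
          rw [Real.sqrt_div (by positivity)]
          have hkk : (k : ℝ) = Real.sqrt k * Real.sqrt k := (Real.mul_self_sqrt hk'.le).symm
          generalize Real.sqrt (k : ℝ) = r at *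
          rw [hkk]
          field_simp
      _ ≤ _ := by
          rw [← Finset.mul_sum]
          exact mul_le_mul_of_nonneg_left (sum_sqrt_upper hN') (by positivity)
  have key2 := key.trans (add_le_add_right herr _)
  rw [← le_div_iff₀' (by positivity)] at key2
  refine key2.trans (le_of_eq ?_)
  have hsq : 0 < Real.sqrt (n : ℝ) := Real.sqrt_pos.2 hn0
  have hnn : (n : ℝ) = Real.sqrt n * Real.sqrt n := (Real.mul_self_sqrt hn0.le).symm
  rw [Real.sqrt_div (by positivity)]
  change (opNorm2 Sigma0⁻¹ * vecNorm (fun i => θprior i - θ i) + _) / _ = _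
  have h2 : 4 * b * σ ^ 2 * dbar ^ 2 * L = 4 * b * τ := by rw [hτ]; ring
  rw [h2]
  generalize Real.sqrt (n : ℝ) = r at *
  rw [hnn]
  field_simp
  ring
end
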